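/- arXiv:2510.19040 — 5 statements merged into one kernel-verified Lean document; each statement's English description precedes it below -/
import Mathlib

section
/- For every B ∈ ℕ there exists a Boolean labeling function g : ℝ → Bool such that: (i) some one-dimensional shape generalized tree with exactly one internal node evaluates to g at every x ∈ [0,1]; and (ii) every one-dimensional binary axis-aligned decision tree with labels in Bool whose evaluation agrees with g at every x ∈ [0,1] has at least B + 1 internal nodes. Consequently, a binary axis-aligned tree requires at least B additional decision nodes to represent g, compared to an SGT. -/
/-!
A one-node SGT can test the sign of `cos ((B + 1) π x)`. The resulting labeling takes alternating
values at the `B + 2` points `i / (B + 1)`, `0 ≤ i ≤ B + 1`, of `[0, 1]`, so it changes value `B + 1`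
times. On the other hand an axis-aligned tree with `n` internal nodes changes value at most `n`
times along a monotone sequence (`AxTree1.le_add_nodes`): the root threshold cuts the
sequence into an initial and a final segment, which are handled by the two subtrees, and creates at
most one further change between them.
-/

/-- A one-dimensional binary axis-aligned decision tree with labels in `α`. -/
inductive AxTree1 (α : Type*) where
  | leaf : α → AxTree1 α
  | node : ℝ → AxTree1 α → AxTree1 α → AxTree1 α

/-- Evaluation of a one-dimensional axis-aligned tree at an input `x`. -/
noncomputable def AxTree1.eval {α : Type*} : AxTree1 α → ℝ → α
  | .leaf a, _ => a
  | .node θ l r, x => if x ≤ θ then l.eval x else r.eval x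

/-- Number of internal nodes of a one-dimensional axis-aligned tree. -/
def AxTree1.nodes {α : Type*} : AxTree1 α → ℕ
  | .leaf _ => 0
  | .node _ l r => 1 + l.nodes + r.nodes

/-- A one-dimensional shape generalized tree (SGT) with labels in `α`. -/
inductive SGT1 (α : Type*) where
  | leaf : α → SGT1 α
  | node : (ℝ → ℝ) → SGT1 α → SGT1 α → SGT1 α

/-- Evaluation of a one-dimensional SGT at an input `x`. -/
noncomputable def SGT1.eval {α : Type*} : SGT1 α → ℝ → α
  | .leaf a, _ => a
  | .node f l r, x => if f x ≤ 0 then l.eval x else r.eval x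

/-- Number of internal nodes of a one-dimensional SGT. -/
def SGT1.nodes {α : Type*} : SGT1 α → ℕ
  | .leaf _ => 0
  | .node _ l r => 1 + l.nodes + r.nodes

/-- If the values of `T` along a monotone sequence change at each step from `a` to `b`, then the
number `b - a` of changes is at most the number of internal nodes of `T`. -/
theorem AxTree1.le_add_nodes {α : Type*} {p : ℕ → ℝ} (hp : Monotone p) (T : AxTree1 α) :
    ∀ a b : ℕ, (∀ i, a ≤ i → i < b → T.eval (p i) ≠ T.eval (p (i + 1))) → b ≤ a + T.nodes := by
  induction T with
  | leaf c =>
    intro a b h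
    by_contra! hab
    exact h a le_rfl (by simpa [AxTree1.nodes] using hab) rfl
  | node θ l r ihl ihr =>
    intro a b h
    -- `m` is the first index up to `b` with `θ < p m`, and `b + 1` if there is none.
    obtain ⟨m, hlt, hge⟩ : ∃ m, (∀ i < m, p i ≤ θ) ∧ (∀ i, m ≤ i → i ≤ b → θ < p i) := by
      classical
      have hex : ∃ i, b < i ∨ θ < p i := ⟨b + 1, Or.inl b.lt_succ_self⟩
      refine ⟨Nat.find hex, fun i hi => ?_, fun i hi hib => ?_⟩
      · have := Nat.find_min hex hi
        push Not at this
        exact this.2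
      · rcases Nat.find_spec hex with h1 | h1
        · omega
        · exact h1.trans_le (hp hi)
    have evl : ∀ i < m, (AxTree1.node θ l r).eval (p i) = l.eval (p i) := fun i hi => by
      simp [AxTree1.eval, hlt i hi]
    have evr : ∀ i, m ≤ i → i ≤ b → (AxTree1.node θ l r).eval (p i) = r.eval (p i) :=
      fun i hi hib => by simp [AxTree1.eval, not_le.mpr (hge i hi hib)]
    have hl := ihl a (min b (m - 1)) fun i hai hi => by
      rw [← evl i (by omega), ← evl (i + 1) (by omega)]
      exact h i hai (by omega)
    have hr := ihr (max a m) b fun i hai hi => by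
      rw [← evr i (by omega) (by omega), ← evr (i + 1) (by omega) (by omega)]
      exact h i (by omega) hi
    simp only [AxTree1.nodes]
    omega

/-- For every `B` there is a Boolean labeling function representable on `[0,1]` by an SGT
with exactly one internal node, while every binary axis-aligned tree representing it on
`[0,1]` needs at least `B + 1` internal nodes — i.e. at least `B` more decision nodes
than the SGT. -/
theorem sgt_vs_axis_tree_gap (B : ℕ) :
    ∃ g : ℝ → Bool,
      (∃ T' : SGT1 Bool, T'.nodes = 1 ∧ ∀ x ∈ Set.Icc (0 : ℝ) 1, T'.eval x = g x) ∧
      (∀ T : AxTree1 Bool, (∀ x ∈ Set.Icc (0 : ℝ) 1, T.eval x = g x) →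
        B + 1 ≤ T.nodes) := by
  refine ⟨fun x => decide (0 < Real.cos ((B + 1) * x * Real.pi)),
    ⟨.node (fun x => Real.cos ((B + 1) * x * Real.pi)) (.leaf false) (.leaf true), rfl,
      fun x _ => ?_⟩, fun T hT => ?_⟩
  · by_cases hx : 0 < Real.cos ((B + 1) * x * Real.pi)
    · simp [SGT1.eval, hx, not_le.mpr hx]
    · simp [SGT1.eval, hx, not_lt.mp hx]
  · have hB : (0 : ℝ) < B + 1 := by positivity
    have hp : Monotone fun i : ℕ => (i : ℝ) / (B + 1) := fun i j hij => by
      dsimp only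
      gcongr
    have ev : ∀ i : ℕ, i ≤ B + 1 →
        T.eval ((i : ℝ) / (B + 1)) = decide ((0 : ℝ) < (-1) ^ i) := fun i hi => by
      have hi' : (i : ℝ) ≤ B + 1 := by exact_mod_cast hi
      rw [hT _ ⟨by positivity, (div_le_one hB).mpr hi'⟩]
      dsimp only
      rw [mul_div_cancel₀ _ hB.ne', Real.cos_nat_mul_pi]
    have key := T.le_add_nodes hp 0 (B + 1) fun i _ hi => by
      rw [ev i (by omega), ev (i + 1) (by omega), pow_succ]
      rcases neg_one_pow_eq_or ℝ i with h | h <;> norm_num [h]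
    omega
end

section
/- For every natural number B ≥ 1, the B-Bars labeling function g_B satisfies: (i) there exists f : ℝ → ℝ such that for all x ∈ ℝ, g_B(x) = true if and only if f(x) ≤ 0; and (ii) for every finite set T ⊆ ℝ of thresholds with |T| ≤ B and every function h : ℝ → Bool that is determined by T (meaning: for all x, y ∈ ℝ, if x ≤ t ↔ y ≤ t for every t ∈ T, then h(x) = h(y)), there exists x ∈ [0,1] with h(x) ≠ g_B(x). -/
/-!
A single split suffices because the label is the sign condition of `f x = cos (2πBx)`.

For the lower bound, the labels alternate along the grid `k / (2B)`, `k = 0, …, 2B`, since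
`cos (kπ) = (-1)^k`. If `h` agreed with `gBars B` on `[0,1]`, some threshold would lie in each of
the `2B` disjoint cells `[k / (2B), (k+1) / (2B))`. So `2B ≤ |T| ≤ B`, contradicting `1 ≤ B`.
-/

/-- The `ω`-Bars labeling function. -/
noncomputable def gBars (ω : ℕ) (x : ℝ) : Bool :=
  if Real.cos (2 * Real.pi * ω * x) ≤ 0 then true else false

lemma gBars_grid (B : ℕ) (hB : 1 ≤ B) (k : ℕ) :
    gBars B ((k : ℝ) / (2 * B)) = decide (Odd k) := by
  have hB0 : (B : ℝ) ≠ 0 := by exact_mod_cast (by omega : B ≠ 0)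
  have harg : 2 * Real.pi * B * ((k : ℝ) / (2 * B)) = k * Real.pi := by
    field_simp
  unfold gBars
  rw [harg, Real.cos_nat_mul_pi]
  rcases Nat.even_or_odd k with hk | hk
  · have hk' : ¬ Odd k := Nat.not_odd_iff_even.mpr hk
    simp [hk.neg_one_pow, hk']
  · simp [hk.neg_one_pow, hk]

/-- The `B`-Bars labeling function is expressible as a single shape-function split, while
no Boolean function determined by at most `B` thresholds agrees with it on all of `[0,1]`. -/
theorem bars_shape_representable_and_thresholds_insufficient (B : ℕ) (hB : 1 ≤ B) :
    (∃ f : ℝ → ℝ, ∀ x : ℝ, gBars B x = true ↔ f x ≤ 0) ∧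
    (∀ T : Finset ℝ, T.card ≤ B →
      ∀ h : ℝ → Bool,
        (∀ x y : ℝ, (∀ t ∈ T, (x ≤ t ↔ y ≤ t)) → h x = h y) →
        ∃ x ∈ Set.Icc (0 : ℝ) 1, h x ≠ gBars B x) := by
  refine ⟨⟨fun x => Real.cos (2 * Real.pi * B * x), fun x => by simp [gBars]⟩, ?_⟩
  intro T hT h hdet
  by_contra! hagree
  have hpos : (0 : ℝ) < 2 * B := by
    have : (1 : ℝ) ≤ B := by exact_mod_cast hB
    linarith
  have hgrid : ∀ k : ℕ, k ≤ 2 * B → h ((k : ℝ) / (2 * B)) = decide (Odd k) := by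
    intro k hk
    rw [← gBars_grid B hB k]
    apply hagree
    refine ⟨by positivity, ?_⟩
    rw [div_le_one hpos]
    exact_mod_cast hk
  -- A threshold in the `k`-th cell is recognised by `⌊2Bt⌋ = k`, so the cells count thresholds.
  have hsub : Finset.range (2 * B) ⊆ T.image (fun t : ℝ => ⌊t * (2 * B)⌋₊) := by
    intro k hk
    have hk := Finset.mem_range.mp hk
    by_contra hnot
    have hne : ∀ t ∈ T, ⌊t * (2 * B)⌋₊ ≠ k := fun t ht he =>
      hnot (Finset.mem_image.mpr ⟨t, ht, he⟩)
    have heq := hdet ((k : ℝ) / (2 * B)) (((k + 1 : ℕ) : ℝ) / (2 * B)) (by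
      intro t ht
      rw [div_le_iff₀ hpos, div_le_iff₀ hpos]
      constructor
      · intro hle
        by_contra! hlt
        refine hne t ht ((Nat.floor_eq_iff (le_trans (Nat.cast_nonneg k) hle)).mpr ⟨hle, ?_⟩)
        exact_mod_cast hlt
      · intro hle
        push_cast at hle
        linarith)
    rw [hgrid k hk.le, hgrid (k + 1) hk] at heq
    rw [decide_eq_decide, Nat.odd_add_one] at heq
    exact iff_not_self heq
  have hcard := (Finset.card_le_card hsub).trans Finset.card_image_le
  rw [Finset.card_range] at hcard
  omega
end

section
/- Let T ⊆ ℝ be a finite set and h : ℝ → Bool a function determined by T, i.e. for all x, y ∈ ℝ, if x ≤ t ↔ y ≤ t for every t ∈ T, then h(x) = h(y). If m ∈ ℕ and x₀ < x₁ < ⋯ < x_m are real numbers with h(x_i) ≠ h(x_{i+1}) for every i < m, then |T| ≥ m. -/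
/-- If `h : ℝ → Bool` is determined by a finite threshold set `T` and alternates along a
strictly increasing chain `x₀ < x₁ < ⋯ < x_m`, then `T` has at least `m` elements. -/
theorem thresholds_lower_bound_of_alternations (T : Finset ℝ) (h : ℝ → Bool)
    (hdet : ∀ x y : ℝ, (∀ t ∈ T, (x ≤ t ↔ y ≤ t)) → h x = h y)
    (m : ℕ) (x : ℕ → ℝ)
    (hmono : ∀ i, i < m → x i < x (i + 1))
    (halt : ∀ i, i < m → h (x i) ≠ h (x (i + 1))) :
    m ≤ T.card := by
  -- Each alternation forces a threshold in `[x i, x (i + 1))`; these intervals are disjoint,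
  -- so choosing one threshold from each is injective.
  have hsep : ∀ i, i < m → ∃ t ∈ T, x i ≤ t ∧ t < x (i + 1) := by
    intro i hi
    by_contra! hno
    refine halt i hi (hdet _ _ fun t ht => ⟨hno t ht, fun hle => ?_⟩)
    exact (hmono i hi).le.trans hle
  have hle : ∀ i j, i ≤ j → j ≤ m → x i ≤ x j := by
    intro i j hij
    induction j, hij using Nat.le_induction with
    | base => exact fun _ => le_rfl
    | succ j _ ih => exact fun hj => (ih (by omega)).trans (hmono j (by omega)).le
  choose! f hfT hfl hfu using hsep
  have hlt : ∀ i j, i < j → j < m → f i < f j := fun i j hij hj =>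
    ((hfu i (hij.trans hj)).trans_le (hle (i + 1) j hij hj.le)).trans_le (hfl j hj)
  have hcard : (Finset.range m).card ≤ T.card := by
    refine Finset.card_le_card_of_injOn f (fun i hi => hfT i (by simpa using hi)) ?_
    intro i hi j hj hij
    simp only [Finset.coe_range, Set.mem_Iio] at hi hj
    rcases lt_trichotomy i j with hl | he | hg
    · exact absurd hij (hlt i j hl hj).ne
    · exact he
    · exact absurd hij (hlt j i hg hi).ne'
  simpa using hcard
end

section
/- Let T be a one-dimensional binary axis-aligned decision tree with labels in Bool, let m ∈ ℕ, and let x₀ < x₁ < ⋯ < x_m be real numbers such that eval T x_i ≠ eval T x_{i+1} for every i < m. Then T has at least m internal nodes. -/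
theorem exists_threshold_split (θ : ℝ) (x : ℕ → ℝ) (m : ℕ)
    (hmono : ∀ i, i < m → x i < x (i + 1)) :
    ∃ k, (∀ i, i < k → i ≤ m → x i ≤ θ) ∧ (∀ i, k ≤ i → i ≤ m → θ < x i) := by
  induction m with
  | zero =>
    by_cases h : x 0 ≤ θ
    · exact ⟨1, fun i hi _ => by
        obtain rfl : i = 0 := by omega
        exact h, fun i hi him => by omega⟩
    · exact ⟨0, fun i hi _ => by omega, fun i _ hi => by
        obtain rfl : i = 0 := by omega
        exact not_le.mp h⟩
  | succ m ih =>
    obtain ⟨k, hle, hgt⟩ := ih fun i hi => hmono i (by omega)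
    have hstep := hmono m (by omega)
    by_cases h : x (m + 1) ≤ θ
    · have hk : m < k := by
        by_contra hk
        have := hgt m (by omega) le_rfl
        linarith
      refine ⟨m + 2, fun i hi _ => ?_, fun i hi him => by omega⟩
      rcases Nat.lt_or_ge m i with him | him
      · obtain rfl : i = m + 1 := by omega
        exact h
      · exact hle i (by omega) him
    -- Truncating at `m + 1` keeps the new point on the right-hand side.
    · refine ⟨min k (m + 1), fun i hi _ => hle i (by omega) (by omega), fun i hi him => ?_⟩
      rcases Nat.lt_or_ge m i with him | him
      · obtain rfl : i = m + 1 := by omega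
        exact not_le.mp h
      · exact hgt i (by omega) him

/-- If the evaluation of a Boolean axis-aligned tree alternates along a strictly
increasing chain `x₀ < x₁ < ⋯ < x_m`, then the tree has at least `m` internal nodes. -/
theorem axis_tree_nodes_lower_bound_of_alternations (T : AxTree1 Bool)
    (m : ℕ) (x : ℕ → ℝ)
    (hmono : ∀ i, i < m → x i < x (i + 1))
    (halt : ∀ i, i < m → T.eval (x i) ≠ T.eval (x (i + 1))) :
    m ≤ T.nodes := by
  induction T generalizing m x with
  | leaf a =>
    by_contra hm
    exact halt 0 (by simp only [AxTree1.nodes] at hm; omega) rfl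
  | node θ l r ihl ihr =>
    obtain ⟨k, hle, hgt⟩ := exists_threshold_split θ x m hmono
    have hl_eval : ∀ i, i < k → i ≤ m → (AxTree1.node θ l r).eval (x i) = l.eval (x i) :=
      fun i hi him => if_pos (hle i hi him)
    have hr_eval : ∀ i, k ≤ i → i ≤ m → (AxTree1.node θ l r).eval (x i) = r.eval (x i) :=
      fun i hi him => if_neg (not_le.mpr (hgt i hi him))
    -- Truncated subtraction is harmless: an empty segment yields only a trivial bound, and `k` may
    -- exceed `m + 1`.
    have hl : min (k - 1) m ≤ l.nodes := by
      refine ihl _ x (fun i hi => hmono i (by omega)) fun i hi => ?_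
      rw [← hl_eval i (by omega) (by omega), ← hl_eval (i + 1) (by omega) (by omega)]
      exact halt i (by omega)
    have hr : m - k ≤ r.nodes := by
      refine ihr _ (fun i => x (k + i)) (fun i hi => hmono (k + i) (by omega)) fun i hi => ?_
      rw [← hr_eval (k + i) (by omega) (by omega),
        ← hr_eval (k + (i + 1)) (by omega) (by omega)]
      exact halt (k + i) (by omega)
    simp only [AxTree1.nodes]
    omega
end

section
/- Let N be a finite index set with labels y : N → C, where C is a finite type, and let N₁, …, N_K be pairwise disjoint subsets of N whose union is N. Then |N|·H(N) ≥ Σ_{k=1}^{K} |N_k|·H(N_k), where H denotes the Gini impurity. Equivalently, the weighted Gini impurity of any finite partition of a labeled dataset into branches is at most the Gini impurity of the parent, i.e. the information gain of any split is nonnegative for the Gini criterion. -/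
/-!
Writing `n_c(A)` for the number of elements of `A` with label `c`, the weighted impurity is
`|A| H(A) = |A| - ∑ c, n_c(A)² / |A|`, also for empty `A` (`wGini_eq`). Over a partition both `|A|`
and `n_c(A)` are additive, so it suffices that `n_c(N)² / |N| ≤ ∑ k, n_c(N_k)² / |N_k|` for each
class `c`: this is the Cauchy–Schwarz inequality in Sedrakyan (Engel) form.
-/

open Finset

/-- Empirical class distribution of a labeled finite set: `Π(A)_c = |{a ∈ A : y a = c}| / |A|`
(equal to `0` for every class when `A` is empty, by `0 / 0 = 0`). -/
noncomputable def empDist {ι C : Type*} [DecidableEq ι] [DecidableEq C]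
    (y : ι → C) (A : Finset ι) (c : C) : ℝ :=
  ((A.filter fun a => y a = c).card : ℝ) / (A.card : ℝ)

/-- Gini impurity `H(A) = 1 − Σ_c Π(A)_c²`. -/
noncomputable def gini {ι C : Type*} [DecidableEq ι] [Fintype C] [DecidableEq C]
    (y : ι → C) (A : Finset ι) : ℝ :=
  1 - ∑ c : C, (empDist y A c) ^ 2

/-- Weighted Gini impurity `|A| · H(A)` (which is `0` when `A` is empty). -/
noncomputable def wGini {ι C : Type*} [DecidableEq ι] [Fintype C] [DecidableEq C]
    (y : ι → C) (A : Finset ι) : ℝ :=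
  (A.card : ℝ) * gini y A

lemma wGini_eq {ι C : Type*} [DecidableEq ι] [Fintype C] [DecidableEq C]
    (y : ι → C) (A : Finset ι) :
    wGini y A =
      (A.card : ℝ) - ∑ c : C, ((A.filter fun a => y a = c).card : ℝ) ^ 2 / (A.card : ℝ) := by
  unfold wGini gini empDist
  rw [mul_sub, mul_one, Finset.mul_sum]
  congr 1
  refine Finset.sum_congr rfl fun c _ => ?_
  rcases eq_or_ne (A.card : ℝ) 0 with h | h
  · simp [h]
  · field_simp

/-- Sedrakyan's inequality where denominators may vanish, provided the matching numerators do. -/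
lemma sq_sum_div_le_of_zero {κ : Type*} (s : Finset κ) (r f : κ → ℝ) (hf : ∀ k ∈ s, 0 ≤ f k)
    (h0 : ∀ k ∈ s, f k = 0 → r k = 0) :
    (∑ k ∈ s, r k) ^ 2 / ∑ k ∈ s, f k ≤ ∑ k ∈ s, r k ^ 2 / f k := by
  have hg : ∀ k ∈ s, 0 ≤ r k ^ 2 / f k := fun k hk => div_nonneg (sq_nonneg _) (hf k hk)
  refine div_le_of_le_mul₀ (Finset.sum_nonneg hf) (Finset.sum_nonneg hg) ?_
  refine Finset.sum_sq_le_sum_mul_sum_of_sq_le_mul s hg hf fun k hk => le_of_eq ?_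
  rcases eq_or_ne (f k) 0 with h | h
  · simp [h, h0 k hk h]
  · field_simp

/-- The weighted Gini impurity of any finite partition of a labeled dataset into branches
is at most the weighted Gini impurity of the parent: the information gain of any split is
nonnegative for the Gini criterion. -/
theorem weighted_gini_superadditive {ι C : Type*} [DecidableEq ι]
    [Fintype C] [DecidableEq C] (y : ι → C) (N : Finset ι)
    (K : ℕ) (Nk : Fin K → Finset ι)
    (hdisj : ∀ i j : Fin K, i ≠ j → Disjoint (Nk i) (Nk j))
    (hunion : Finset.univ.biUnion Nk = N) :
    ∑ k : Fin K, wGini y (Nk k) ≤ wGini y N := by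
  subst hunion
  have hcard : ((Finset.univ.biUnion Nk).card : ℝ) = ∑ k, ((Nk k).card : ℝ) := by
    rw [Finset.card_biUnion fun i _ j _ hij => hdisj i j hij, Nat.cast_sum]
  have hclass (c : C) : (((Finset.univ.biUnion Nk).filter fun a => y a = c).card : ℝ) =
      ∑ k, (((Nk k).filter fun a => y a = c).card : ℝ) := by
    rw [Finset.filter_biUnion, Finset.card_biUnion fun i _ j _ hij =>
      Finset.disjoint_filter_filter (hdisj i j hij), Nat.cast_sum]
  simp only [wGini_eq, Finset.sum_sub_distrib, hcard, hclass]
  rw [Finset.sum_comm]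
  refine sub_le_sub_left (Finset.sum_le_sum fun c _ => ?_) _
  refine sq_sum_div_le_of_zero _ _ _ (fun k _ => Nat.cast_nonneg _) fun k _ hk => ?_
  have hempty : Nk k = ∅ := by simpa using hk
  simp [hempty]
end
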